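/- Let L ≥ 2 and θ ∈ ℝ. With P the projection onto the hole-free subspace, the self-dual Hamiltonian H_SD(θ) = H_BLBQ(θ) + U_KT H_BLBQ(θ) U_KT satisfies P H_SD(θ) P = P H_XXZ(θ) P + 3(L−1) sinθ · P, where H_XXZ(θ) = (cosθ−sinθ) Σ_{j=1}^{L−1} (−σˣ_jσˣ_{j+1} + σʸ_jσʸ_{j+1}) + sinθ Σ_{j=1}^{L−1} σᶻ_jσᶻ_{j+1}. -/

import Mathlib

noncomputable section
open Complex Matrix

/-- The Hilbert space operators of the `L`-site spin-1 chain: matrices on `(ℂ³)^{⊗L}`,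
with the tensor factors indexed by sites and the single-site ordered basis `(|+⟩,|0⟩,|−⟩)`. -/
abbrev Op (L : ℕ) : Type := Matrix (Fin L → Fin 3) (Fin L → Fin 3) ℂ

/-- The spin-1 matrix `Sˣ`. -/
def Sx : Matrix (Fin 3) (Fin 3) ℂ :=
  ((Real.sqrt 2 : ℝ) : ℂ)⁻¹ • !![0, 1, 0; 1, 0, 1; 0, 1, 0]

/-- The spin-1 matrix `Sʸ`. -/
def Sy : Matrix (Fin 3) (Fin 3) ℂ :=
  ((Real.sqrt 2 : ℝ) : ℂ)⁻¹ • !![0, -I, 0; I, 0, -I; 0, I, 0]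

/-- The spin-1 matrix `Sᶻ = diag(1,0,−1)`. -/
def Sz : Matrix (Fin 3) (Fin 3) ℂ := !![1, 0, 0; 0, 0, 0; 0, 0, -1]

/-- `site A j` is the one-site operator `A` acting on site `j` and identity elsewhere. -/
def site {L : ℕ} (A : Matrix (Fin 3) (Fin 3) ℂ) (j : Fin L) : Op L :=
  Matrix.of fun f g => ∏ k : Fin L, if k = j then A (f k) (g k) else (if f k = g k then 1 else 0)

/-- One factor `exp(iπ Sᶻ_u Sˣ_v)` of the Kennedy–Tasaki transformation. -/
def ktFactor {L : ℕ} (u v : Fin L) : Op L :=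
  NormedSpace.exp (((Real.pi : ℂ) * I) • (site Sz u * site Sx v))

/-- The Kennedy–Tasaki transformation `U_KT = ∏_{1 ≤ u < v ≤ L} exp(iπ Sᶻ_u Sˣ_v)`
(the factors pairwise commute, so the ordering is immaterial). -/
def UKT (L : ℕ) : Op L :=
  ((List.finRange L).map fun u =>
    ((List.finRange L).map fun v => if u < v then ktFactor u v else 1).prod).prod

/-- The p-wave basis vector `|↑⟩ = (|+⟩ − |−⟩)/√2`. -/
def up : Fin 3 → ℂ := ![((Real.sqrt 2 : ℝ) : ℂ)⁻¹, 0, -((Real.sqrt 2 : ℝ) : ℂ)⁻¹]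

/-- The p-wave basis vector `|↓⟩ = |0⟩`. -/
def down : Fin 3 → ℂ := ![0, 1, 0]

/-- The p-wave basis vector `|h⟩ = (|+⟩ + |−⟩)/√2`. -/
def hole : Fin 3 → ℂ := ![((Real.sqrt 2 : ℝ) : ℂ)⁻¹, 0, ((Real.sqrt 2 : ℝ) : ℂ)⁻¹]

/-- The rank-one operator `|a⟩⟨b|`. -/
def ketbra (a b : Fin 3 → ℂ) : Matrix (Fin 3) (Fin 3) ℂ := Matrix.vecMulVec a (star b)

/-- `σˣ = |↑⟩⟨↓| + |↓⟩⟨↑|` (annihilating `|h⟩`). -/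
def sigx : Matrix (Fin 3) (Fin 3) ℂ := ketbra up down + ketbra down up

/-- `σʸ = −i|↑⟩⟨↓| + i|↓⟩⟨↑|` (annihilating `|h⟩`). -/
def sigy : Matrix (Fin 3) (Fin 3) ℂ := (-I) • ketbra up down + I • ketbra down up

/-- `σᶻ = |↑⟩⟨↑| − |↓⟩⟨↓|` (annihilating `|h⟩`). -/
def sigz : Matrix (Fin 3) (Fin 3) ℂ := ketbra up up - ketbra down down

/-- `n = |↑⟩⟨↑| + |↓⟩⟨↓|` (annihilating `|h⟩`). -/
def nMat : Matrix (Fin 3) (Fin 3) ℂ := ketbra up up + ketbra down down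

/-- `h = |h⟩⟨h|`. -/
def hMat : Matrix (Fin 3) (Fin 3) ℂ := ketbra hole hole

/-- `P = ⊗_{j=1}^L n_j`, the orthogonal projection onto the hole-free subspace. -/
def Pproj (L : ℕ) : Op L := Matrix.of fun f g => ∏ k : Fin L, nMat (f k) (g k)

/-- The Heisenberg coupling `S_j · S_k`. -/
def heis {L : ℕ} (j k : Fin L) : Op L :=
  site Sx j * site Sx k + site Sy j * site Sy k + site Sz j * site Sz k

/-- The bilinear-biquadratic Hamiltonian
`H_BLBQ(θ) = Σ_{j=1}^{L−1} [cosθ (S_j·S_{j+1}) + sinθ (S_j·S_{j+1})²]`. -/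
def HBLBQ (L : ℕ) (θ : ℝ) : Op L :=
  ∑ j : Fin L, if h : (j : ℕ) + 1 < L then
    ((Real.cos θ : ℝ) : ℂ) • heis j ⟨(j : ℕ) + 1, h⟩
      + ((Real.sin θ : ℝ) : ℂ) • (heis j ⟨(j : ℕ) + 1, h⟩) ^ 2
  else 0

/-- The self-dual Hamiltonian `H_SD(θ) = H_BLBQ(θ) + U_KT H_BLBQ(θ) U_KT`. -/
def HSD (L : ℕ) (θ : ℝ) : Op L := HBLBQ L θ + UKT L * HBLBQ L θ * UKT L

/-- The spin-1/2 XXZ Hamiltonian written in the p-wave basis: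
`H_XXZ(θ) = (cosθ−sinθ) Σ_j (−σˣ_jσˣ_{j+1} + σʸ_jσʸ_{j+1}) + sinθ Σ_j σᶻ_jσᶻ_{j+1}`. -/
def HXXZ (L : ℕ) (θ : ℝ) : Op L :=
  ((Real.cos θ - Real.sin θ : ℝ) : ℂ) •
    (∑ j : Fin L, if h : (j : ℕ) + 1 < L then
      -(site sigx j * site sigx ⟨(j : ℕ) + 1, h⟩) + site sigy j * site sigy ⟨(j : ℕ) + 1, h⟩
    else 0)
  + ((Real.sin θ : ℝ) : ℂ) •
    (∑ j : Fin L, if h : (j : ℕ) + 1 < L then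
      site sigz j * site sigz ⟨(j : ℕ) + 1, h⟩
    else 0)

/-- The global product `∏_{j=1}^L exp(c • A_j)` of commuting single-site exponentials. -/
def globalProd (L : ℕ) (A : Matrix (Fin 3) (Fin 3) ℂ) (c : ℂ) : Op L :=
  ((List.finRange L).map fun j => NormedSpace.exp (c • site A j)).prod

/-- The symmetry flux `F^y_j = exp(−iπ Σ_{k<j} Sʸ_k) · Sʸ_j`. -/
def fluxY (L : ℕ) (j : Fin L) : Op L :=
  NormedSpace.exp ((-((Real.pi : ℂ) * I)) •
    ∑ k : Fin L, if (k : ℕ) < (j : ℕ) then site Sy k else 0) * site Sy j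

/-!
In the product p-wave basis `U_KT` is diagonal: on a basis vector `x` its eigenvalue is the sign
`(-1) ^ q(x)`, where `q(x) = ∑_{u < v} a(x_u) b(x_v)` and `a`, `b` are the mod 2 indicators of the
supports of `(Sᶻ)²` and `(Sˣ)²`. In particular `U_KT` is an involution commuting with `P` and with
every `σᶻ_j`. If `j`, `k` are adjacent sites and both parities are flipped on both of them, then `q`
changes by `a(x_j) + b(x_k) + 1` only, the contributions of all other sites cancelling in pairs; so
conjugation by `U_KT` acts locally on the bond and sends `σʸ_j σʸ_k` to `-σˣ_j σˣ_k`.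

As `n Sˣ n = n Sᶻ n = 0` and `Sʸ = σʸ`, compressing the bond operators to the hole-free subspace
gives `P (S_j · S_k) P = P σʸ_j σʸ_k P` and
`P (S_j · S_k)² P = ½ P (3 + σᶻ_j σᶻ_k + σˣ_j σˣ_k - σʸ_j σʸ_k) P`, and adding the `U_KT`-conjugates
of these two identities gives the bond terms of the XXZ chain plus the constant `3 sin θ`.
-/

section Exponential

theorem pow_even_of_pow_three_eq_self {M : Type*} [Monoid M] {x : M} (hx : x ^ 3 = x) (n : ℕ) :
    x ^ (2 * (n + 1)) = x ^ 2 := by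
  induction n with
  | zero => rfl
  | succ n ih =>
    rw [show 2 * (n + 1 + 1) = 2 * (n + 1) + 2 by ring, pow_add, ih, ← pow_add, pow_succ, hx, sq]

theorem pow_odd_of_pow_three_eq_self {M : Type*} [Monoid M] {x : M} (hx : x ^ 3 = x) (n : ℕ) :
    x ^ (2 * n + 1) = x := by
  cases n with
  | zero => simp
  | succ n => rw [pow_succ, pow_even_of_pow_three_eq_self hx, ← pow_succ, hx]

variable {A : Type*} [Ring A] [Algebra ℂ A] [TopologicalSpace A] [IsTopologicalRing A]
  [ContinuousSMul ℂ A] [T2Space A]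

theorem exp_smul_of_pow_three_eq_self {x : A} (hx : x ^ 3 = x) (c : ℂ) :
    NormedSpace.exp (c • x) = 1 + sinh c • x + (cosh c - 1) • x ^ 2 := by
  let term (n : ℕ) : A := (n.factorial⁻¹ : ℂ) • (c • x) ^ n
  have even_terms : HasSum (fun n => term (2 * n)) (cosh c • x ^ 2 + (1 - x ^ 2)) := by
    convert ((hasSum_cosh c).smul_const (x ^ 2)).add (hasSum_ite_eq 0 (1 - x ^ 2)) using 2 with n
    cases n with
    | zero => simp [term]
    | succ n =>
      simp [term, smul_pow, pow_even_of_pow_three_eq_self hx, smul_smul, div_eq_inv_mul]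
  have odd_terms : HasSum (fun n => term (2 * n + 1)) (sinh c • x) := by
    simpa only [term, smul_pow, pow_odd_of_pow_three_eq_self hx, smul_smul, div_eq_inv_mul]
      using (hasSum_sinh c).smul_const x
  calc NormedSpace.exp (c • x) = ∑' n, term n := congrFun (NormedSpace.exp_eq_tsum ℂ) _
    _ = cosh c • x ^ 2 + (1 - x ^ 2) + sinh c • x := (even_terms.even_add_odd odd_terms).tsum_eq
    _ = 1 + sinh c • x + (cosh c - 1) • x ^ 2 := by module

theorem exp_pi_mul_I_smul_of_pow_three_eq_self {x : A} (hx : x ^ 3 = x) :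
    NormedSpace.exp (((Real.pi : ℂ) * I) • x) = 1 - (2 : ℂ) • x ^ 2 := by
  rw [exp_smul_of_pow_three_eq_self hx, sinh_mul_I, cosh_mul_I, sin_pi, cos_pi]
  module

end Exponential

section StrictUpperTriangle

/-- The matrix of the bilinear form `(a, b) ↦ ∑_{u < v} a_u b_v`. -/
def strictUpper (ι R : Type*) [LinearOrder ι] [Zero R] [One R] : Matrix ι ι R :=
  Matrix.of fun u v => if u < v then 1 else 0

variable {ι R : Type*} [LinearOrder ι] [Fintype ι] [CommRing R] [CharP R 2] {j k : ι}

theorem strictUpper_mulVec_single_add_single (h : j ⋖ k) :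
    strictUpper ι R *ᵥ (Pi.single j 1 + Pi.single k 1) = Pi.single j 1 := by
  ext u
  rcases lt_trichotomy u j with huj | rfl | huj
  · simp [mulVec_add, strictUpper, h.lt_iff_le_left, huj, huj.le, huj.ne,
      CharTwo.add_self_eq_zero]
  · simp [mulVec_add, strictUpper, h.lt_iff_le_left]
  · simp [mulVec_add, strictUpper, h.lt_iff_le_left, huj.not_gt, huj.not_ge, huj.ne']

theorem single_add_single_vecMul_strictUpper (h : j ⋖ k) :
    (Pi.single j 1 + Pi.single k 1) ᵥ* strictUpper ι R = Pi.single k 1 := by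
  ext v
  rcases lt_trichotomy v k with hvk | rfl | hvk
  · simp [add_vecMul, strictUpper, h.lt_iff_le_right, hvk.not_gt, hvk.not_ge, hvk.ne]
  · simp [add_vecMul, strictUpper, h.lt_iff_le_right]
  · simp [add_vecMul, strictUpper, h.lt_iff_le_right, hvk, hvk.le, hvk.ne',
      CharTwo.add_self_eq_zero]

theorem dotProduct_strictUpper_mulVec_add_single_add_single (h : j ⋖ k) (a b : ι → R) :
    (a + (Pi.single j 1 + Pi.single k 1)) ⬝ᵥ
        strictUpper ι R *ᵥ (b + (Pi.single j 1 + Pi.single k 1)) =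
      a ⬝ᵥ strictUpper ι R *ᵥ b + (a j + b k + 1) := by
  rw [mulVec_add, strictUpper_mulVec_single_add_single h, dotProduct_add, add_dotProduct,
    dotProduct_mulVec (Pi.single j 1 + _), single_add_single_vecMul_strictUpper h]
  simp only [single_dotProduct, dotProduct_single, Pi.add_apply, Pi.single_eq_same,
    Pi.single_eq_of_ne h.ne, one_mul, mul_one, add_zero]
  ring

end StrictUpperTriangle

section PiKronecker

variable {ι n R : Type*} [Fintype ι] [CommSemiring R]

/-- The Kronecker product `⨂_k A_k` of a finite family of matrices, acting on the product basis
indexed by functions `ι → n`. -/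
def piKronecker (A : ι → Matrix n n R) : Matrix (ι → n) (ι → n) R :=
  Matrix.of fun x y => ∏ k, A k (x k) (y k)

theorem piKronecker_mul [DecidableEq ι] [Fintype n] (A B : ι → Matrix n n R) :
    piKronecker A * piKronecker B = piKronecker (A * B) := by
  ext x y
  simp only [piKronecker, mul_apply, of_apply, Pi.mul_apply, ← Finset.prod_mul_distrib,
    Finset.prod_univ_sum, Fintype.piFinset_univ]

theorem piKronecker_diagonal [DecidableEq n] (d : ι → n → R) :
    piKronecker (fun k => diagonal (d k)) = diagonal fun x => ∏ k, d k (x k) := by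
  ext x y
  by_cases hxy : x = y
  · simp [piKronecker, hxy]
  · obtain ⟨k, hk⟩ := Function.ne_iff.mp hxy
    simpa [piKronecker, hxy] using Finset.prod_eq_zero (Finset.mem_univ k) (by simp [hk])

theorem piKronecker_one [DecidableEq n] :
    piKronecker (1 : ι → Matrix n n R) = 1 := by
  simpa [Pi.one_def] using piKronecker_diagonal (1 : ι → n → R)

theorem conjTranspose_piKronecker [StarRing R] (A : ι → Matrix n n R) :
    (piKronecker A)ᴴ = piKronecker fun k => (A k)ᴴ := by
  ext x y
  simp [piKronecker]

theorem piKronecker_mem_unitary [DecidableEq ι] [Fintype n] [DecidableEq n] [StarRing R]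
    {A : ι → Matrix n n R} (hA : ∀ k, A k ∈ unitary (Matrix n n R)) :
    piKronecker A ∈ unitary (Matrix (ι → n) (ι → n) R) := by
  rw [Unitary.mem_iff, star_eq_conjTranspose, conjTranspose_piKronecker, piKronecker_mul,
    piKronecker_mul, ← piKronecker_one]
  exact ⟨congrArg _ (funext fun k => (hA k).1), congrArg _ (funext fun k => (hA k).2)⟩

end PiKronecker

/-- Operators on a single spin-1 site. -/
abbrev SiteOp : Type := Matrix (Fin 3) (Fin 3) ℂ

section Site

variable {L : ℕ}

theorem site_eq_piKronecker (A : SiteOp) (j : Fin L) :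
    site A j = piKronecker (Pi.mulSingle (M := fun _ => SiteOp) j A) := by
  ext x y
  simp only [site, piKronecker, of_apply]
  refine Finset.prod_congr rfl fun k _ => ?_
  by_cases hk : k = j
  · subst hk; simp
  · simp [hk, one_apply]

theorem site_one (j : Fin L) : site 1 j = 1 := by
  rw [site_eq_piKronecker, Pi.mulSingle_one, piKronecker_one]

theorem site_mul (A B : SiteOp) (j : Fin L) :
    site (A * B) j = site A j * site B j := by
  simp only [site_eq_piKronecker, piKronecker_mul, Pi.mulSingle_mul]

theorem site_pow (A : SiteOp) (j : Fin L) (n : ℕ) : site (A ^ n) j = site A j ^ n := by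
  induction n with
  | zero => rw [pow_zero, pow_zero, site_one]
  | succ n ih => rw [pow_succ, pow_succ, site_mul, ih]

theorem site_commute {j k : Fin L} (hjk : j ≠ k) (A B : SiteOp) :
    Commute (site A j) (site B k) := by
  simp only [Commute, SemiconjBy, site_eq_piKronecker, piKronecker_mul]
  exact congrArg piKronecker (Pi.mulSingle_commute (f := fun _ => SiteOp) hjk A B).eq

theorem site_mul_site_mul_site_mul_site {j k : Fin L} (hjk : j ≠ k)
    (A B C D : SiteOp) :
    site A j * site B k * (site C j * site D k) = site (A * C) j * site (B * D) k := by
  rw [site_mul, site_mul, (site_commute hjk.symm B C).mul_mul_mul_comm]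

theorem site_apply (A : SiteOp) (j : Fin L) (x y : Fin L → Fin 3) :
    site A j x y = A (x j) (y j) * ∏ k ∈ Finset.univ.erase j, if x k = y k then 1 else 0 := by
  rw [site, of_apply, ← Finset.mul_prod_erase _ _ (Finset.mem_univ j), if_pos rfl]
  congr 1
  exact Finset.prod_congr rfl fun k hk => if_neg (Finset.ne_of_mem_erase hk)

theorem site_add (A B : SiteOp) (j : Fin L) :
    site (A + B) j = site A j + site B j := by
  ext x y
  simp only [site_apply, Matrix.add_apply, add_mul]

theorem site_smul (c : ℂ) (A : SiteOp) (j : Fin L) :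
    site (c • A) j = c • site A j := by
  ext x y
  simp only [site_apply, Matrix.smul_apply, smul_eq_mul, mul_assoc]

theorem site_zero (j : Fin L) : site 0 j = 0 := by
  simpa using site_smul 0 0 j

theorem site_sub (A B : SiteOp) (j : Fin L) :
    site (A - B) j = site A j - site B j := by
  ext x y
  simp only [site_apply, Matrix.sub_apply, sub_mul]

theorem site_diagonal (d : Fin 3 → ℂ) (j : Fin L) :
    site (diagonal d) j = diagonal fun x => d (x j) := by
  have mulSingle_diagonal :
      Pi.mulSingle (M := fun _ => SiteOp) j (diagonal d) =
        fun k => diagonal (Pi.mulSingle (M := fun _ => Fin 3 → ℂ) j d k) := by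
    ext1 k
    by_cases hk : k = j
    · subst hk; simp
    · simp [hk]
  rw [site_eq_piKronecker, mulSingle_diagonal, piKronecker_diagonal]
  congr 1 with x
  rw [Fintype.prod_eq_single j fun k hk => by simp [hk], Pi.mulSingle_eq_same]

theorem site_mul_site_apply {j k : Fin L} (hjk : j ≠ k) (A B : SiteOp)
    (x y : Fin L → Fin 3) :
    (site A j * site B k) x y =
      if ∀ l, l ≠ j → l ≠ k → x l = y l then A (x j) (y j) * B (x k) (y k) else 0 := by
  rw [site_eq_piKronecker, site_eq_piKronecker, piKronecker_mul, piKronecker, of_apply]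
  split_ifs with hxy
  · rw [Fintype.prod_eq_mul j k hjk fun l hl => by simp [hl, hxy l hl.1 hl.2]]
    simp [hjk, hjk.symm]
  · push Not at hxy
    obtain ⟨l, hlj, hlk, hl⟩ := hxy
    exact Finset.prod_eq_zero (Finset.mem_univ l) (by simp [hlj, hlk, hl])

end Site

section PWave

theorem inv_sqrt_two_mul_inv_sqrt_two :
    ((Real.sqrt 2 : ℝ) : ℂ)⁻¹ * ((Real.sqrt 2 : ℝ) : ℂ)⁻¹ = 2⁻¹ := by
  rw [← mul_inv, ← ofReal_mul, Real.mul_self_sqrt zero_le_two, ofReal_ofNat]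

/-- The change of basis from `(|↑⟩, |↓⟩, |h⟩)` to `(|+⟩, |0⟩, |−⟩)`: its columns are the p-wave
basis vectors. -/
def pwaveUnitary : unitary SiteOp :=
  ⟨(Matrix.of ![up, down, hole])ᵀ, by
    rw [← unitaryGroup, mem_unitaryGroup_iff]
    ext i j
    fin_cases i <;> fin_cases j <;>
      simp [mul_apply, Fin.sum_univ_three, up, down, hole, inv_sqrt_two_mul_inv_sqrt_two] <;>
      norm_num⟩

/-- The one-site operator with a given matrix in the p-wave basis `(|↑⟩, |↓⟩, |h⟩)`. -/
def ofPWave : SiteOp ≃⋆ₐ[ℂ] SiteOp := Unitary.conjStarAlgAut ℂ SiteOp pwaveUnitary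

theorem ofPWave_single (p q : Fin 3) :
    ofPWave (single p q 1) = ketbra (![up, down, hole] p) (![up, down, hole] q) := by
  ext i j
  simp [ofPWave, pwaveUnitary, ketbra, vecMulVec_apply, mul_apply, single_apply, ite_and]

theorem Sx_eq_ofPWave : Sx = ofPWave !![0, 0, 0; 0, 0, 1; 0, 1, 0] := by
  ext i j
  fin_cases i <;> fin_cases j <;>
    simp [Sx, ofPWave, pwaveUnitary, mul_apply, Fin.sum_univ_three, up, down, hole]

theorem Sy_eq_ofPWave : Sy = ofPWave !![0, -I, 0; I, 0, 0; 0, 0, 0] := by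
  ext i j
  fin_cases i <;> fin_cases j <;>
    simp [Sy, ofPWave, pwaveUnitary, mul_apply, Fin.sum_univ_three, up, down, hole, mul_comm]

theorem Sz_eq_ofPWave : Sz = ofPWave !![0, 0, 1; 0, 0, 0; 1, 0, 0] := by
  ext i j
  fin_cases i <;> fin_cases j <;>
    simp [Sz, ofPWave, pwaveUnitary, mul_apply, Fin.sum_univ_three, up, down, hole,
      inv_sqrt_two_mul_inv_sqrt_two] <;>
    norm_num

theorem sigx_eq_ofPWave : sigx = ofPWave !![0, 1, 0; 1, 0, 0; 0, 0, 0] := by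
  have h : !![0, 1, 0; 1, 0, 0; 0, 0, 0] = single 0 1 1 + (single 1 0 1 : SiteOp) := by
    ext i j; fin_cases i <;> fin_cases j <;> simp
  simp [h, ofPWave_single, sigx]

theorem sigy_eq_ofPWave : sigy = ofPWave !![0, -I, 0; I, 0, 0; 0, 0, 0] := by
  have h : !![0, -I, 0; I, 0, 0; 0, 0, 0] =
      (-I) • single 0 1 1 + I • (single 1 0 1 : SiteOp) := by
    ext i j; fin_cases i <;> fin_cases j <;> simp
  simp only [h, map_add, map_smul, ofPWave_single, sigy]
  rfl

theorem sigz_eq_ofPWave : sigz = ofPWave (diagonal ![1, -1, 0]) := by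
  have h : diagonal ![1, -1, 0] = single 0 0 1 - (single 1 1 1 : SiteOp) := by
    ext i j; fin_cases i <;> fin_cases j <;> simp
  simp [h, ofPWave_single, sigz]

theorem nMat_eq_ofPWave : nMat = ofPWave (diagonal ![1, 1, 0]) := by
  have h : diagonal ![1, 1, 0] = single 0 0 1 + (single 1 1 1 : SiteOp) := by
    ext i j; fin_cases i <;> fin_cases j <;> simp
  simp [h, ofPWave_single, nMat]

theorem Sy_eq_sigy : Sy = sigy := by rw [Sy_eq_ofPWave, sigy_eq_ofPWave]

theorem Sx_sq_eq_ofPWave : Sx ^ 2 = ofPWave (diagonal ![0, 1, 1]) := by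
  rw [Sx_eq_ofPWave, ← map_pow]
  congr 1
  ext i j
  fin_cases i <;> fin_cases j <;> simp [sq, mul_apply, Fin.sum_univ_three]

theorem Sz_sq_eq_ofPWave : Sz ^ 2 = ofPWave (diagonal ![1, 0, 1]) := by
  rw [Sz_eq_ofPWave, ← map_pow]
  congr 1
  ext i j
  fin_cases i <;> fin_cases j <;> simp [sq, mul_apply, Fin.sum_univ_three]

theorem Sx_pow_three : Sx ^ 3 = Sx := by
  rw [pow_succ, Sx_sq_eq_ofPWave, Sx_eq_ofPWave, ← map_mul]
  congr 1
  ext i j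
  fin_cases i <;> fin_cases j <;> simp

theorem Sz_pow_three : Sz ^ 3 = Sz := by
  rw [pow_succ, Sz_sq_eq_ofPWave, Sz_eq_ofPWave, ← map_mul]
  congr 1
  ext i j
  fin_cases i <;> fin_cases j <;> simp

end PWave

section Compression

theorem nMat_mul_ofPWave_mul_nMat (A : SiteOp) :
    nMat * ofPWave A * nMat =
      ofPWave !![A 0 0, A 0 1, 0; A 1 0, A 1 1, 0; 0, 0, 0] := by
  rw [nMat_eq_ofPWave, ← map_mul, ← map_mul]
  congr 1
  ext i j
  fin_cases i <;> fin_cases j <;> simp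

theorem nMat_mul_nMat : nMat * nMat = nMat := by
  rw [nMat_eq_ofPWave, ← map_mul, diagonal_mul_diagonal]
  congr 2
  ext i
  fin_cases i <;> simp

theorem nMat_mul_Sx_mul_nMat : nMat * Sx * nMat = 0 := by
  rw [Sx_eq_ofPWave, nMat_mul_ofPWave_mul_nMat, EmbeddingLike.map_eq_zero_iff]
  ext i j
  fin_cases i <;> fin_cases j <;> simp

theorem nMat_mul_Sz_mul_nMat : nMat * Sz * nMat = 0 := by
  rw [Sz_eq_ofPWave, nMat_mul_ofPWave_mul_nMat, EmbeddingLike.map_eq_zero_iff]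
  ext i j
  fin_cases i <;> fin_cases j <;> simp

theorem nMat_mul_Sx_sq_mul_nMat : nMat * Sx ^ 2 * nMat = (2⁻¹ : ℂ) • (nMat - sigz) := by
  rw [Sx_sq_eq_ofPWave, nMat_mul_ofPWave_mul_nMat, nMat_eq_ofPWave, sigz_eq_ofPWave,
    ← map_sub, ← map_smul]
  congr 1
  ext i j
  fin_cases i <;> fin_cases j <;> norm_num [vecHead, vecTail]

theorem nMat_mul_Sz_sq_mul_nMat : nMat * Sz ^ 2 * nMat = (2⁻¹ : ℂ) • (nMat + sigz) := by
  rw [Sz_sq_eq_ofPWave, nMat_mul_ofPWave_mul_nMat, nMat_eq_ofPWave, sigz_eq_ofPWave,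
    ← map_add, ← map_smul]
  congr 1
  ext i j
  fin_cases i <;> fin_cases j <;> norm_num [vecHead, vecTail]

theorem nMat_mul_Sx_mul_Sz_mul_nMat :
    nMat * (Sx * Sz) * nMat = (2⁻¹ : ℂ) • (sigx - I • sigy) := by
  rw [Sx_eq_ofPWave, Sz_eq_ofPWave, ← map_mul, nMat_mul_ofPWave_mul_nMat, sigx_eq_ofPWave,
    sigy_eq_ofPWave, ← map_smul, ← map_sub, ← map_smul]
  congr 1
  ext i j
  fin_cases i <;> fin_cases j <;> norm_num

theorem nMat_mul_Sz_mul_Sx_mul_nMat :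
    nMat * (Sz * Sx) * nMat = (2⁻¹ : ℂ) • (sigx + I • sigy) := by
  rw [Sx_eq_ofPWave, Sz_eq_ofPWave, ← map_mul, nMat_mul_ofPWave_mul_nMat, sigx_eq_ofPWave,
    sigy_eq_ofPWave, ← map_smul, ← map_add, ← map_smul]
  congr 1
  ext i j
  fin_cases i <;> fin_cases j <;> norm_num

theorem sigy_sq : sigy ^ 2 = nMat := by
  rw [sigy_eq_ofPWave, nMat_eq_ofPWave, ← map_pow]
  congr 1
  ext i j
  fin_cases i <;> fin_cases j <;> simp [sq, mul_apply, Fin.sum_univ_three]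

theorem nMat_commute_sigy : Commute nMat sigy := by
  rw [← sigy_sq]
  exact (Commute.refl sigy).pow_left 2

end Compression

section HoleFree

variable {L : ℕ}

theorem Pproj_eq_piKronecker (L : ℕ) : Pproj L = piKronecker fun _ => nMat := rfl

theorem Pproj_mul_site_nMat (j : Fin L) : Pproj L * site nMat j = Pproj L := by
  rw [Pproj_eq_piKronecker, site_eq_piKronecker, piKronecker_mul]
  congr 1 with k : 1
  by_cases hk : k = j
  · subst hk; simp [nMat_mul_nMat]
  · simp [hk]

theorem site_nMat_mul_Pproj (j : Fin L) : site nMat j * Pproj L = Pproj L := by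
  rw [Pproj_eq_piKronecker, site_eq_piKronecker, piKronecker_mul]
  congr 1 with k : 1
  by_cases hk : k = j
  · subst hk; simp [nMat_mul_nMat]
  · simp [hk]

theorem Pproj_mul_Pproj (L : ℕ) : Pproj L * Pproj L = Pproj L := by
  rw [Pproj_eq_piKronecker, piKronecker_mul]
  exact congrArg piKronecker (funext fun _ => nMat_mul_nMat)

/-- The compression `A ↦ P A P` to the hole-free subspace. -/
def compress (L : ℕ) : Op L →ₗ[ℂ] Op L := LinearMap.mulLeftRight ℂ (Pproj L, Pproj L)

theorem compress_apply (A : Op L) : compress L A = Pproj L * A * Pproj L :=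
  LinearMap.mulLeftRight_apply ..

theorem compress_mul_mul_of_commute {U : Op L} (hU : Commute U (Pproj L)) (A : Op L) :
    compress L (U * A * U) = U * compress L A * U := by
  simp only [compress_apply, mul_assoc, hU.eq, hU.left_comm]

variable {j k : Fin L}

theorem compress_site_mul_site (hjk : j ≠ k) (A B : SiteOp) :
    compress L (site A j * site B k) =
      compress L (site (nMat * A * nMat) j * site (nMat * B * nMat) k) := by
  have left : Pproj L * (site nMat j * site nMat k) = Pproj L := by
    rw [← mul_assoc, Pproj_mul_site_nMat, Pproj_mul_site_nMat]
  have right : site nMat j * site nMat k * Pproj L = Pproj L := by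
    rw [mul_assoc, site_nMat_mul_Pproj, site_nMat_mul_Pproj]
  calc compress L (site A j * site B k)
      = Pproj L * (site nMat j * site nMat k) * (site A j * site B k) *
          (site nMat j * site nMat k * Pproj L) := by rw [compress_apply, left, right]
    _ = compress L (site nMat j * site nMat k * (site A j * site B k) *
          (site nMat j * site nMat k)) := by simp only [compress_apply, mul_assoc]
    _ = compress L (site (nMat * A * nMat) j * site (nMat * B * nMat) k) := by
      simp only [site_mul_site_mul_site_mul_site hjk]

theorem compress_site_mul_site_eq_zero (hjk : j ≠ k) {A : SiteOp} (hA : nMat * A * nMat = 0)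
    (B : SiteOp) : compress L (site A j * site B k) = 0 := by
  rw [compress_site_mul_site hjk, hA, site_zero, zero_mul, map_zero]

theorem compress_site_nMat_mul_site_nMat (j k : Fin L) :
    compress L (site nMat j * site nMat k) = Pproj L := by
  rw [compress_apply, ← mul_assoc, Pproj_mul_site_nMat, Pproj_mul_site_nMat, Pproj_mul_Pproj]

end HoleFree

section Heisenberg

variable {L : ℕ} {j k : Fin L}

theorem compress_heis (hjk : j ≠ k) :
    compress L (heis j k) = compress L (site sigy j * site sigy k) := by
  rw [heis, map_add, map_add, compress_site_mul_site_eq_zero hjk nMat_mul_Sx_mul_nMat,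
    compress_site_mul_site_eq_zero hjk nMat_mul_Sz_mul_nMat, Sy_eq_sigy, zero_add, add_zero]

theorem heis_sq (hjk : j ≠ k) :
    heis j k ^ 2 =
      site (Sx ^ 2) j * site (Sx ^ 2) k + site (Sy ^ 2) j * site (Sy ^ 2) k +
        site (Sz ^ 2) j * site (Sz ^ 2) k +
      (site (Sx * Sz) j * site (Sx * Sz) k + site (Sz * Sx) j * site (Sz * Sx) k) +
      (site (Sx * Sy) j * site (Sx * Sy) k + site (Sy * Sx) j * site (Sy * Sx) k +
        site (Sy * Sz) j * site (Sy * Sz) k + site (Sz * Sy) j * site (Sz * Sy) k) := by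
  simp only [heis, sq, mul_add, add_mul, site_mul_site_mul_site_mul_site hjk]
  abel

theorem compress_site_Sx_sq_add_site_Sz_sq (hjk : j ≠ k) :
    compress L (site (Sx ^ 2) j * site (Sx ^ 2) k + site (Sz ^ 2) j * site (Sz ^ 2) k) =
      (2⁻¹ : ℂ) • (Pproj L + compress L (site sigz j * site sigz k)) := by
  rw [map_add, compress_site_mul_site hjk, compress_site_mul_site hjk (Sz ^ 2),
    nMat_mul_Sx_sq_mul_nMat, nMat_mul_Sz_sq_mul_nMat, ← compress_site_nMat_mul_site_nMat j k]
  simp only [site_smul, site_add, site_sub, smul_mul_assoc, mul_smul_comm, mul_add, add_mul,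
    mul_sub, sub_mul, map_add, map_sub, map_smul]
  module

theorem compress_site_Sx_mul_Sz_add_site_Sz_mul_Sx (hjk : j ≠ k) :
    compress L (site (Sx * Sz) j * site (Sx * Sz) k + site (Sz * Sx) j * site (Sz * Sx) k) =
      (2⁻¹ : ℂ) • compress L (site sigx j * site sigx k - site sigy j * site sigy k) := by
  rw [map_add, compress_site_mul_site hjk, compress_site_mul_site hjk (Sz * Sx),
    nMat_mul_Sx_mul_Sz_mul_nMat, nMat_mul_Sz_mul_Sx_mul_nMat]
  simp only [site_smul, site_add, site_sub, smul_mul_assoc, mul_smul_comm, mul_add, add_mul,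
    mul_sub, sub_mul, map_add, map_sub, map_smul]
  linear_combination (norm := module) (2⁻¹ : ℂ) • I_mul_I • compress L (site sigy j * site sigy k)

theorem compress_site_mixed_Sy_eq_zero (hjk : j ≠ k) :
    compress L (site (Sx * Sy) j * site (Sx * Sy) k + site (Sy * Sx) j * site (Sy * Sx) k +
        site (Sy * Sz) j * site (Sy * Sz) k + site (Sz * Sy) j * site (Sz * Sy) k) = 0 := by
  have compress_mul_Sy {A : SiteOp} (hA : nMat * A * nMat = 0) : nMat * (A * Sy) * nMat = 0 := by
    rw [Sy_eq_sigy, mul_assoc, mul_assoc, ← nMat_commute_sigy.eq, ← mul_assoc, ← mul_assoc, hA,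
      zero_mul]
  have compress_Sy_mul {A : SiteOp} (hA : nMat * A * nMat = 0) : nMat * (Sy * A) * nMat = 0 := by
    rw [Sy_eq_sigy, ← mul_assoc, nMat_commute_sigy.eq, mul_assoc, mul_assoc, ← mul_assoc nMat, hA,
      mul_zero]
  simp only [map_add,
    compress_site_mul_site_eq_zero hjk (compress_mul_Sy nMat_mul_Sx_mul_nMat),
    compress_site_mul_site_eq_zero hjk (compress_Sy_mul nMat_mul_Sx_mul_nMat),
    compress_site_mul_site_eq_zero hjk (compress_Sy_mul nMat_mul_Sz_mul_nMat),
    compress_site_mul_site_eq_zero hjk (compress_mul_Sy nMat_mul_Sz_mul_nMat), add_zero]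

theorem compress_heis_sq (hjk : j ≠ k) :
    compress L (heis j k ^ 2) =
      (3 / 2 : ℂ) • Pproj L + (1 / 2 : ℂ) • compress L (site sigz j * site sigz k) +
        (1 / 2 : ℂ) • compress L (site sigx j * site sigx k - site sigy j * site sigy k) := by
  rw [heis_sq hjk, add_right_comm (site (Sx ^ 2) j * _), map_add, map_add, map_add,
    compress_site_Sx_sq_add_site_Sz_sq hjk, compress_site_Sx_mul_Sz_add_site_Sz_mul_Sx hjk,
    compress_site_mixed_Sy_eq_zero hjk, Sy_eq_sigy, sigy_sq, compress_site_nMat_mul_site_nMat]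
  module

end Heisenberg

section PWaveChain

variable {L : ℕ}

/-- The operator on the chain with a given matrix in the product p-wave basis. -/
def ofPWaveChain (L : ℕ) : Op L ≃⋆ₐ[ℂ] Op L :=
  Unitary.conjStarAlgAut ℂ (Op L)
    ⟨piKronecker fun _ => (pwaveUnitary : SiteOp),
      piKronecker_mem_unitary fun _ => pwaveUnitary.property⟩

theorem ofPWaveChain_piKronecker (A : Fin L → SiteOp) :
    ofPWaveChain L (piKronecker A) = piKronecker fun k => ofPWave (A k) := by
  simp only [ofPWaveChain, Unitary.conjStarAlgAut_apply, star_eq_conjTranspose,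
    conjTranspose_piKronecker, piKronecker_mul]
  rfl

theorem ofPWaveChain_site (A : SiteOp) (j : Fin L) :
    ofPWaveChain L (site A j) = site (ofPWave A) j := by
  rw [site_eq_piKronecker, site_eq_piKronecker, ofPWaveChain_piKronecker]
  congr 1 with k : 1
  exact Pi.apply_mulSingle (fun _ => ofPWave) (fun _ => map_one ofPWave) j A k

/-- The operator that is diagonal in the product p-wave basis with given eigenvalues. -/
def pwaveDiagonal (L : ℕ) : ((Fin L → Fin 3) → ℂ) →ₐ[ℂ] Op L :=
  (ofPWaveChain L : Op L →ₐ[ℂ] Op L).comp (diagonalAlgHom ℂ)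

theorem pwaveDiagonal_apply (d : (Fin L → Fin 3) → ℂ) :
    pwaveDiagonal L d = ofPWaveChain L (diagonal d) := rfl

theorem site_ofPWave_diagonal (d : Fin 3 → ℂ) (j : Fin L) :
    site (ofPWave (diagonal d)) j = pwaveDiagonal L fun x => d (x j) := by
  rw [← ofPWaveChain_site, site_diagonal, pwaveDiagonal_apply]

theorem Pproj_eq_pwaveDiagonal (L : ℕ) :
    Pproj L = pwaveDiagonal L fun x => ∏ k, ![1, 1, 0] (x k) := by
  rw [Pproj_eq_piKronecker, nMat_eq_ofPWave, ← ofPWaveChain_piKronecker, piKronecker_diagonal,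
    pwaveDiagonal_apply]

end PWaveChain

section KennedyTasaki

/-- The character `a ↦ (-1) ^ a` of `ZMod 2`. -/
def signChar : AddChar (ZMod 2) ℂ := AddChar.zmodChar 2 (ζ := -1) neg_one_sq

/-- The exponent of `-1` by which `exp (iπ Sᶻ)` acts on a p-wave basis vector. -/
def zParity : Fin 3 → ZMod 2 := ![1, 0, 1]

/-- The exponent of `-1` by which `exp (iπ Sˣ)` acts on a p-wave basis vector. -/
def xParity : Fin 3 → ZMod 2 := ![0, 1, 1]

/-- The exponent of `-1` in the eigenvalue of `U_KT` on a product of p-wave basis vectors. -/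
def ktParity {L : ℕ} (x : Fin L → Fin 3) : ZMod 2 :=
  (zParity ∘ x) ⬝ᵥ strictUpper (Fin L) (ZMod 2) *ᵥ (xParity ∘ x)

variable {L : ℕ}

theorem signChar_mul_self (a : ZMod 2) : signChar a * signChar a = 1 := by
  rw [← AddChar.map_add_eq_mul, CharTwo.add_self_eq_zero, AddChar.map_zero_eq_one]

theorem signChar_one : signChar 1 = -1 := by
  simp [signChar, AddChar.zmodChar_apply, ZMod.val_one]

theorem signChar_parity_mul_parity (p q : Fin 3) :
    signChar (zParity p * xParity q) = 1 - 2 * (![1, 0, 1] p * ![0, 1, 1] q) := by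
  fin_cases p <;> fin_cases q <;> norm_num [zParity, xParity, signChar_one]

theorem ktFactor_eq_pwaveDiagonal {u v : Fin L} (huv : u ≠ v) :
    ktFactor u v = pwaveDiagonal L fun x => signChar (zParity (x u) * xParity (x v)) := by
  have cube : (site Sz u * site Sx v) ^ 3 = site Sz u * site Sx v := by
    rw [(site_commute huv Sz Sx).mul_pow, ← site_pow, ← site_pow, Sz_pow_three, Sx_pow_three]
  rw [ktFactor, exp_pi_mul_I_smul_of_pow_three_eq_self cube, (site_commute huv Sz Sx).mul_pow,
    ← site_pow, ← site_pow, Sz_sq_eq_ofPWave, Sx_sq_eq_ofPWave, site_ofPWave_diagonal,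
    site_ofPWave_diagonal, ← map_mul, ← map_smul, ← map_one (pwaveDiagonal L), ← map_sub]
  congr 1 with x
  exact (signChar_parity_mul_parity _ _).symm

theorem prod_map_finRange_map {n : ℕ} {M N F : Type*} [CommMonoid M] [Monoid N] [FunLike F M N]
    [MonoidHomClass F M N] (φ : F) (f : Fin n → M) :
    ((List.finRange n).map fun i => φ (f i)).prod = φ (∏ i, f i) := by
  rw [Fin.prod_univ_def, map_list_prod, List.map_map, Function.comp_def]

theorem addChar_map_sum_eq_prod {ι A M : Type*} [AddCommMonoid A] [CommMonoid M]
    (ψ : AddChar A M) (s : Finset ι) (f : ι → A) :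
    ψ (∑ i ∈ s, f i) = ∏ i ∈ s, ψ (f i) :=
  map_prod ψ.toMonoidHom (fun i => Multiplicative.ofAdd (f i)) s

theorem UKT_eq_pwaveDiagonal (L : ℕ) :
    UKT L = pwaveDiagonal L fun x => signChar (ktParity x) := by
  have factor (u v : Fin L) : (if u < v then ktFactor u v else 1) =
      pwaveDiagonal L fun x =>
        signChar (zParity (x u) * (strictUpper (Fin L) (ZMod 2) u v * xParity (x v))) := by
    split_ifs with huv
    · simp [ktFactor_eq_pwaveDiagonal huv.ne, strictUpper, huv]
    · simp only [strictUpper, huv, of_apply, if_false, zero_mul, mul_zero,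
        AddChar.map_zero_eq_one]
      exact (map_one (pwaveDiagonal L)).symm
  simp only [UKT, factor, prod_map_finRange_map]
  congr 1 with x
  simp only [ktParity, dotProduct, mulVec, Function.comp_apply, Finset.mul_sum,
    addChar_map_sum_eq_prod, Finset.prod_apply]

theorem UKT_mul_UKT (L : ℕ) : UKT L * UKT L = 1 := by
  rw [UKT_eq_pwaveDiagonal, ← map_mul, ← map_one (pwaveDiagonal L)]
  congr 1 with x
  exact signChar_mul_self _

theorem UKT_commute_Pproj (L : ℕ) : Commute (UKT L) (Pproj L) := by
  rw [UKT_eq_pwaveDiagonal, Pproj_eq_pwaveDiagonal]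
  exact (Commute.all _ _).map (pwaveDiagonal L)

theorem UKT_commute_site_sigz (j : Fin L) : Commute (UKT L) (site sigz j) := by
  rw [UKT_eq_pwaveDiagonal, sigz_eq_ofPWave, site_ofPWave_diagonal]
  exact (Commute.all _ _).map (pwaveDiagonal L)

end KennedyTasaki

section BondConjugation

theorem comp_eq_comp_add_single_add_single {ι α M : Type*} [DecidableEq ι] [AddMonoidWithOne M]
    {f : α → M} {x y : ι → α} {j k : ι} (hjk : j ≠ k)
    (hxy : ∀ l, l ≠ j → l ≠ k → x l = y l) (hj : f (y j) = f (x j) + 1)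
    (hk : f (y k) = f (x k) + 1) :
    f ∘ y = f ∘ x + (Pi.single j 1 + Pi.single k 1) := by
  ext l
  by_cases hlj : l = j
  · subst hlj; simp [hj, hjk]
  · by_cases hlk : l = k
    · subst hlk; simp [hk, hjk.symm]
    · simp [hlj, hlk, hxy l hlj hlk]

/-- Operators (in p-wave coordinates) that exchange the even and odd eigenspaces of both
`exp (iπ Sᶻ)` and `exp (iπ Sˣ)`. -/
def FlipsParities (A : SiteOp) : Prop :=
  ∀ p q, A p q ≠ 0 → zParity q = zParity p + 1 ∧ xParity q = xParity p + 1

variable {L : ℕ} {j k : Fin L}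

theorem signChar_ktParity_mul_signChar_ktParity (hjk : j ⋖ k) {x y : Fin L → Fin 3}
    (hz : zParity ∘ y = zParity ∘ x + (Pi.single j 1 + Pi.single k 1))
    (hx : xParity ∘ y = xParity ∘ x + (Pi.single j 1 + Pi.single k 1)) :
    signChar (ktParity x) * signChar (ktParity y) =
      -(signChar (zParity (x j)) * signChar (xParity (x k))) := by
  rw [ktParity, ktParity, hz, hx, dotProduct_strictUpper_mulVec_add_single_add_single hjk,
    AddChar.map_add_eq_mul, ← mul_assoc, signChar_mul_self, one_mul, AddChar.map_add_eq_mul,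
    AddChar.map_add_eq_mul, signChar_one, mul_neg_one, Function.comp_apply, Function.comp_apply]

theorem UKT_mul_site_mul_site_mul_UKT (hjk : j ⋖ k) {A B : SiteOp} (hA : FlipsParities A)
    (hB : FlipsParities B) :
    UKT L * (site (ofPWave A) j * site (ofPWave B) k) * UKT L =
      -(site (ofPWave (diagonal (signChar ∘ zParity) * A)) j *
        site (ofPWave (diagonal (signChar ∘ xParity) * B)) k) := by
  simp only [UKT_eq_pwaveDiagonal, pwaveDiagonal_apply, ← ofPWaveChain_site, ← map_mul, ← map_neg]
  congr 1
  ext x y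
  rw [mul_diagonal, diagonal_mul, neg_apply, site_mul_site_apply hjk.ne,
    site_mul_site_apply hjk.ne, diagonal_mul, diagonal_mul]
  split_ifs with hxy
  · by_cases hne : A (x j) (y j) ≠ 0 ∧ B (x k) (y k) ≠ 0
    · have hj := hA _ _ hne.1
      have hk := hB _ _ hne.2
      have sign := signChar_ktParity_mul_signChar_ktParity hjk
        (comp_eq_comp_add_single_add_single hjk.ne hxy hj.1 hk.1)
        (comp_eq_comp_add_single_add_single hjk.ne hxy hj.2 hk.2)
      simp only [Function.comp_apply]
      linear_combination A (x j) (y j) * B (x k) (y k) * sign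
    · rcases not_and_or.mp hne with h | h <;> simp [not_not.mp h]
  · simp

theorem UKT_mul_site_sigy_mul_site_sigy_mul_UKT (hjk : j ⋖ k) :
    UKT L * (site sigy j * site sigy k) * UKT L = -(site sigx j * site sigx k) := by
  have flips : FlipsParities !![0, -I, 0; I, 0, 0; 0, 0, 0] := by
    intro p q
    fin_cases p <;> fin_cases q <;> simp [zParity, xParity, CharTwo.add_self_eq_zero]
  have z_part : diagonal (signChar ∘ zParity) * !![0, -I, 0; I, 0, 0; 0, 0, 0] =
      I • !![0, 1, 0; 1, 0, 0; 0, 0, 0] := by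
    ext p q
    fin_cases p <;> fin_cases q <;> simp [zParity, signChar_one]
  have x_part : diagonal (signChar ∘ xParity) * !![0, -I, 0; I, 0, 0; 0, 0, 0] =
      (-I) • !![0, 1, 0; 1, 0, 0; 0, 0, 0] := by
    ext p q
    fin_cases p <;> fin_cases q <;> simp [xParity, signChar_one]
  rw [sigy_eq_ofPWave, UKT_mul_site_mul_site_mul_UKT hjk flips flips, z_part, x_part, map_smul,
    map_smul, ← sigx_eq_ofPWave, site_smul, site_smul, smul_mul_smul_comm]
  simp

theorem UKT_mul_site_sigx_mul_site_sigx_mul_UKT (hjk : j ⋖ k) :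
    UKT L * (site sigx j * site sigx k) * UKT L = -(site sigy j * site sigy k) := by
  rw [← neg_eq_iff_eq_neg, ← neg_mul, ← mul_neg,
    ← UKT_mul_site_sigy_mul_site_sigy_mul_UKT hjk]
  simp only [← mul_assoc, UKT_mul_UKT, one_mul]
  simp only [mul_assoc, UKT_mul_UKT, mul_one]

theorem UKT_mul_site_sigz_mul_site_sigz_mul_UKT (j k : Fin L) :
    UKT L * (site sigz j * site sigz k) * UKT L = site sigz j * site sigz k := by
  rw [((UKT_commute_site_sigz j).mul_right (UKT_commute_site_sigz k)).eq, mul_assoc, UKT_mul_UKT,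
    mul_one]

theorem compress_bond_add_UKT_mul_bond_mul_UKT (hjk : j ⋖ k) (c s : ℂ) :
    compress L ((c • heis j k + s • heis j k ^ 2) +
        UKT L * (c • heis j k + s • heis j k ^ 2) * UKT L) =
      compress L ((c - s) • (-(site sigx j * site sigx k) + site sigy j * site sigy k) +
        s • (site sigz j * site sigz k)) + (3 * s) • Pproj L := by
  have conj_compress (A : Op L) := compress_mul_mul_of_commute (UKT_commute_Pproj L) A
  have conj_Pproj : UKT L * Pproj L * UKT L = Pproj L := by
    rw [(UKT_commute_Pproj L).eq, mul_assoc, UKT_mul_UKT, mul_one]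
  rw [map_add, conj_compress, map_add, map_smul, map_smul, compress_heis hjk.ne,
    compress_heis_sq hjk.ne]
  simp only [mul_add, add_mul, mul_smul_comm, smul_mul_assoc, ← conj_compress, conj_Pproj,
    mul_sub, sub_mul, UKT_mul_site_sigx_mul_site_sigx_mul_UKT hjk,
    UKT_mul_site_sigy_mul_site_sigy_mul_UKT hjk, UKT_mul_site_sigz_mul_site_sigz_mul_UKT,
    map_add, map_sub, map_neg, map_smul]
  module

end BondConjugation

section Chain

theorem castSucc_covBy_succ {m : ℕ} (i : Fin m) : i.castSucc ⋖ i.succ :=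
  ⟨Fin.castSucc_lt_succ, fun _ hi => (Fin.castSucc_lt_iff_succ_le.mp hi).not_gt⟩

theorem sum_fin_dite_succ_lt {m : ℕ} {M : Type*} [AddCommMonoid M]
    (f : (j : Fin (m + 1)) → (j : ℕ) + 1 < m + 1 → M) :
    (∑ j : Fin (m + 1), if h : (j : ℕ) + 1 < m + 1 then f j h else 0) =
      ∑ i : Fin m, f i.castSucc (Nat.succ_lt_succ i.isLt) := by
  simp [Fin.sum_univ_castSucc]

theorem HBLBQ_succ (m : ℕ) (θ : ℝ) :
    HBLBQ (m + 1) θ = ∑ i : Fin m,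
      ((Real.cos θ : ℂ) • heis i.castSucc i.succ + (Real.sin θ : ℂ) • heis i.castSucc i.succ ^ 2) :=
  sum_fin_dite_succ_lt _

theorem HXXZ_succ (m : ℕ) (θ : ℝ) :
    HXXZ (m + 1) θ = ∑ i : Fin m,
      (((Real.cos θ : ℂ) - Real.sin θ) •
          (-(site sigx i.castSucc * site sigx i.succ) + site sigy i.castSucc * site sigy i.succ) +
        (Real.sin θ : ℂ) • (site sigz i.castSucc * site sigz i.succ)) := by
  rw [HXXZ, sum_fin_dite_succ_lt, sum_fin_dite_succ_lt, Finset.smul_sum, Finset.smul_sum,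
    ← Finset.sum_add_distrib, ofReal_sub]
  rfl

end Chain

/-- With `P` the projection onto the hole-free subspace,
`P H_SD(θ) P = P H_XXZ(θ) P + 3(L−1) sinθ · P`. -/
theorem proj_HSD (L : ℕ) (hL : 2 ≤ L) (θ : ℝ) :
    Pproj L * HSD L θ * Pproj L =
      Pproj L * HXXZ L θ * Pproj L
        + (3 * ((L : ℂ) - 1) * ((Real.sin θ : ℝ) : ℂ)) • Pproj L := by
  obtain ⟨m, rfl⟩ : ∃ m, L = m + 1 := ⟨L - 1, by lia⟩
  have bond (i : Fin m) :=
    compress_bond_add_UKT_mul_bond_mul_UKT (castSucc_covBy_succ i) (Real.cos θ) (Real.sin θ)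
  rw [← compress_apply, ← compress_apply, HSD, HBLBQ_succ, HXXZ_succ, Finset.mul_sum,
    Finset.sum_mul, ← Finset.sum_add_distrib, map_sum, map_sum,
    Finset.sum_congr rfl fun i _ => bond i, Finset.sum_add_distrib, Finset.sum_const,
    Finset.card_univ, Fintype.card_fin, ← Nat.cast_smul_eq_nsmul ℂ, smul_smul]
  congr 2
  push_cast
  ring

end
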